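/- Finite propagation speed for the fractional wave equation: let n ≥ 1, α ∈ (0,1), τ > 0, let c : ℝⁿ → ℝ be smooth with c(x) ≥ c₀ for some constant c₀ > 0, let a : ℝⁿ → ℝ be smooth with a ≥ 0, and let φ : ℝⁿ → ℝ be smooth with c(x)² |∇φ(x)|² ≤ 1 for all x. Let u : ℝ × ℝⁿ → ℝ be smooth, with supp u(t,·) contained in a fixed compact set for all t ∈ [0,τ], satisfying ∂_t² u − c(x)² Δu + a(x) ∂_t^α u = 0 on (0,τ) × ℝⁿ. If u(0,x) = 0 and ∂_t u(0,x) = 0 for every x with φ(x) < τ, then u(t,x) = 0 whenever 0 ≤ t ≤ τ and φ(x) < τ − t. -/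

import Mathlib

open MeasureTheory Set

/-- Partial derivative `∂f/∂xᵢ` of `f : ℝⁿ → ℝ` at `x`. -/
noncomputable def partialD {n : ℕ} (f : (Fin n → ℝ) → ℝ) (i : Fin n) (x : Fin n → ℝ) : ℝ :=
  deriv (fun s => f (Function.update x i s)) (x i)

/-- Second partial derivative `∂²f/∂xᵢ²` of `f : ℝⁿ → ℝ` at `x`. -/
noncomputable def secondPartial {n : ℕ} (f : (Fin n → ℝ) → ℝ) (i : Fin n) (x : Fin n → ℝ) : ℝ :=
  deriv (fun s => deriv (fun r => f (Function.update x i r)) s) (x i)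

/-- The Laplacian of `f : ℝⁿ → ℝ`, i.e. the sum of the second partial derivatives. -/
noncomputable def laplacian {n : ℕ} (f : (Fin n → ℝ) → ℝ) (x : Fin n → ℝ) : ℝ :=
  ∑ i, secondPartial f i x

/-- The Caputo fractional derivative of order `α`:
`∂_t^α f(t) = (1/Γ(1-α)) ∫₀^t (t-s)^{-α} f'(s) ds`. -/
noncomputable def caputo (α : ℝ) (f : ℝ → ℝ) (t : ℝ) : ℝ :=
  (1 / Real.Gamma (1 - α)) * ∫ s in (0:ℝ)..t, (t - s) ^ (-α) * deriv f s

/-- The energy `E(t) = ∫ (c⁻² |∂_t u|² + |∇ₓ u|²) dx`. -/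
noncomputable def energy {n : ℕ} (c : (Fin n → ℝ) → ℝ) (u : ℝ → (Fin n → ℝ) → ℝ) (t : ℝ) : ℝ :=
  ∫ x, (((c x) ^ 2)⁻¹ * (deriv (fun s => u s x) t) ^ 2 + ∑ i, (partialD (u t) i x) ^ 2)


/-- Exponential memory variable. -/
noncomputable def memY (f : ℝ → ℝ) (l t : ℝ) : ℝ :=
  Real.exp (-(l * t)) * ∫ s in (0:ℝ)..t, Real.exp (l * s) * f s

lemma memY_hasDerivAt {f : ℝ → ℝ} (hf : Continuous f) (l t : ℝ) :
    HasDerivAt (memY f l) (f t - l * memY f l t) t := by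
  have h1 : HasDerivAt (fun t => ∫ s in (0:ℝ)..t, Real.exp (l * s) * f s)
      (Real.exp (l * t) * f t) t := by
    have hc : Continuous fun s => Real.exp (l * s) * f s := by fun_prop
    exact intervalIntegral.integral_hasDerivAt_right (hc.intervalIntegrable _ _)
      (hc.stronglyMeasurableAtFilter _ _) hc.continuousAt
  have h2 : HasDerivAt (fun t => Real.exp (-(l * t))) (Real.exp (-(l * t)) * (-(l * 1))) t :=
    (((hasDerivAt_id t).const_mul l).neg).exp
  have h3 := h2.mul h1
  have he : Real.exp (-(l * t)) * Real.exp (l * t) = 1 := by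
    rw [← Real.exp_add]; simp
  refine h3.congr_deriv ?_
  unfold memY
  linear_combination f t * he

lemma memY_pos {f w : ℝ → ℝ} (hf : Continuous f) (hw : ContDiff ℝ 1 w) (hw0 : ∀ t, 0 ≤ w t)
    (hw1 : ∀ t, deriv w t ≤ 0) {l T : ℝ} (hl : 0 ≤ l) (hT : 0 ≤ T) :
    0 ≤ ∫ t in (0:ℝ)..T, w t * f t * memY f l t := by
  have hyc : Continuous (memY f l) :=
    continuous_iff_continuousAt.2 fun t => (memY_hasDerivAt hf l t).continuousAt
  have hwc := hw.continuous
  have hwd : Continuous (deriv w) := hw.continuous_deriv le_rfl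
  have hd : ∀ t, HasDerivAt (fun t => w t * (memY f l t) ^ 2 / 2)
      (deriv w t * (memY f l t) ^ 2 / 2 + w t * memY f l t * (f t - l * memY f l t)) t := by
    intro t
    have h1 := ((hw.differentiable one_ne_zero t).hasDerivAt.mul
      ((memY_hasDerivAt hf l t).pow 2)).div_const 2
    refine h1.congr_deriv ?_
    simp
    ring
  have hI := intervalIntegral.integral_eq_sub_of_hasDerivAt (a := 0) (b := T) (fun t _ => hd t)
    (Continuous.intervalIntegrable (by fun_prop) _ _)
  have hm : ∫ t in (0:ℝ)..T, (deriv w t * (memY f l t) ^ 2 / 2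
      + w t * memY f l t * (f t - l * memY f l t)) ≤ ∫ t in (0:ℝ)..T, w t * f t * memY f l t := by
    apply intervalIntegral.integral_mono_on hT (Continuous.intervalIntegrable (by fun_prop) _ _)
      (Continuous.intervalIntegrable (by fun_prop) _ _)
    intro t _
    have a1 : deriv w t * (memY f l t) ^ 2 ≤ 0 :=
      mul_nonpos_of_nonpos_of_nonneg (hw1 t) (sq_nonneg _)
    have a2 : 0 ≤ w t * l * (memY f l t) ^ 2 := mul_nonneg (mul_nonneg (hw0 t) hl) (sq_nonneg _)
    nlinarith
  have h0 : memY f l 0 = 0 := by simp [memY]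
  rw [hI, h0] at hm
  have : 0 ≤ w T * (memY f l T) ^ 2 / 2 := by have := hw0 T; positivity
  simp at hm
  linarith

lemma memY_bound {f : ℝ → ℝ} {M t l : ℝ} (ht : 0 ≤ t)
    (hM : ∀ s ∈ Icc 0 t, |f s| ≤ M) (hl : 0 < l) :
    |memY f l t| ≤ M * t ∧ |memY f l t| ≤ M * l⁻¹ := by
  have hM0 : 0 ≤ M := (abs_nonneg _).trans (hM 0 ⟨le_rfl, ht⟩)
  have he : Real.exp (-(l * t)) * Real.exp (l * t) = 1 := by
    rw [← Real.exp_add]; simp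
  have hp := Real.exp_pos (-(l * t))
  have habs : |memY f l t| = Real.exp (-(l * t)) * |∫ s in (0:ℝ)..t, Real.exp (l * s) * f s| := by
    unfold memY; rw [abs_mul, abs_of_pos hp]
  constructor
  · have := intervalIntegral.norm_integral_le_of_norm_le_const (a := 0) (b := t)
      (f := fun s => Real.exp (l * s) * f s) (C := Real.exp (l * t) * M) (by
        intro s hs
        rw [uIoc_of_le ht] at hs
        rw [Real.norm_eq_abs, abs_mul, abs_of_pos (Real.exp_pos _)]
        have := hM s ⟨hs.1.le, hs.2⟩
        have := hs.2
        gcongr)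
    rw [Real.norm_eq_abs, sub_zero, abs_of_nonneg ht] at this
    rw [habs]
    calc _ ≤ Real.exp (-(l * t)) * (Real.exp (l * t) * M * t) := by gcongr
      _ = M * t := by linear_combination M * t * he
  · have h1 : |∫ s in (0:ℝ)..t, Real.exp (l * s) * f s| ≤ ∫ s in (0:ℝ)..t, Real.exp (l * s) * M := by
      have := intervalIntegral.norm_integral_le_of_norm_le (a := 0) (b := t) (μ := volume)
        (f := fun s => Real.exp (l * s) * f s) (g := fun s => Real.exp (l * s) * M) ht (by
          refine Filter.Eventually.of_forall fun s hs => ?_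
          rw [Real.norm_eq_abs, abs_mul, abs_of_pos (Real.exp_pos _)]
          have := hM s ⟨hs.1.le, hs.2⟩
          gcongr) (Continuous.intervalIntegrable (by fun_prop) _ _)
      exact this
    have h2 : ∫ s in (0:ℝ)..t, Real.exp (l * s) * M = (Real.exp (l * t) - 1) * M * l⁻¹ := by
      rw [intervalIntegral.integral_eq_sub_of_hasDerivAt (f := fun s => Real.exp (l * s) * M * l⁻¹)]
      · simp; ring
      · intro s _
        have := ((((hasDerivAt_id s).const_mul l).exp).mul_const M).mul_const l⁻¹
        refine this.congr_deriv ?_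
        simp; field_simp
      · exact Continuous.intervalIntegrable (by fun_prop) _ _
    rw [habs]
    calc _ ≤ Real.exp (-(l * t)) * ((Real.exp (l * t) - 1) * M * l⁻¹) := by rw [← h2]; gcongr
      _ = M * l⁻¹ - Real.exp (-(l * t)) * (M * l⁻¹) := by linear_combination M * l⁻¹ * he
      _ ≤ M * l⁻¹ := by have : 0 ≤ Real.exp (-(l * t)) * (M * l⁻¹) := by positivity
                        linarith

lemma memY_continuous {f : ℝ → ℝ} (hf : Continuous f) :
    Continuous fun p : ℝ × ℝ => memY f p.1 p.2 := by
  unfold memY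
  have := intervalIntegral.continuous_parametric_primitive_of_continuous (μ := volume) (a₀ := 0)
    (f := fun (l s : ℝ) => Real.exp (l * s) * f s) (by
      simp only [Function.uncurry_def]; fun_prop)
  exact (by fun_prop : Continuous fun p : ℝ × ℝ => Real.exp (-(p.1 * p.2))).mul this

lemma expint {α r : ℝ} (hα : 0 < α) (hr : 0 < r) :
    IntegrableOn (fun l : ℝ => l ^ (α - 1) * Real.exp (-(r * l))) (Ioi 0) ∧
    ∫ l in Ioi (0:ℝ), l ^ (α - 1) * Real.exp (-(r * l)) = r ^ (-α) * Real.Gamma α := by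
  have h := Real.integral_rpow_mul_exp_neg_mul_Ioi hα hr
  have hG := Real.Gamma_pos_of_pos hα
  refine ⟨.of_integral_ne_zero (by rw [h]; positivity), ?_⟩
  rw [h, one_div, Real.inv_rpow hr.le, Real.rpow_neg hr.le]

lemma caputo_repr {α : ℝ} (hα : α ∈ Ioo (0:ℝ) 1) {f : ℝ → ℝ} (hf : Continuous f) {t : ℝ}
    (ht : 0 ≤ t) :
    Real.Gamma α * ∫ s in (0:ℝ)..t, (t - s) ^ (-α) * f s
      = ∫ l in Ioi (0:ℝ), l ^ (α - 1) * memY f l t := by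
  have hG := Real.Gamma_pos_of_pos hα.1
  have hkint : IntervalIntegrable (fun s => (t - s) ^ (-α)) volume 0 t := by
    have := (intervalIntegral.intervalIntegrable_rpow' (a := t) (b := 0) (r := -α)
      (by linarith [hα.2])).comp_sub_left t
    simpa using this
  have hmem : ∀ᵐ s ∂(volume.restrict (Ioc 0 t)), s ∈ Ioo 0 t := by
    rw [← Measure.restrict_congr_set (Ioo_ae_eq_Ioc (a := (0:ℝ)) (b := t))]
    exact ae_restrict_mem measurableSet_Ioo
  have hint : Integrable (Function.uncurry fun s l : ℝ =>
      l ^ (α - 1) * Real.exp (-((t - s) * l)) * f s)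
      ((volume.restrict (Ioc 0 t)).prod (volume.restrict (Ioi 0))) := by
    rw [integrable_prod_iff]
    · constructor
      · filter_upwards [hmem] with s hs
        exact (expint hα.1 (sub_pos.2 hs.2)).1.mul_const (f s)
      · have h1 : Integrable (fun s => (t - s) ^ (-α) * Real.Gamma α * |f s|)
            (volume.restrict (Ioc 0 t)) := by
          have := ((hkint.mul_const (Real.Gamma α)).mul_continuousOn (g := fun s => |f s|)
            (by fun_prop))
          rwa [intervalIntegrable_iff_integrableOn_Ioc_of_le ht] at this
        refine h1.congr ?_
        filter_upwards [hmem] with s hs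
        rw [← (expint hα.1 (sub_pos.2 hs.2)).2, ← integral_mul_const]
        refine setIntegral_congr_fun measurableSet_Ioi fun l hl => ?_
        have hl : 0 < l := hl
        simp only [Function.uncurry, norm_mul, Real.norm_eq_abs, Real.abs_exp]
        rw [abs_of_nonneg (Real.rpow_nonneg hl.le _)]
    · apply Measurable.aestronglyMeasurable
      simp only [Function.uncurry_def]
      have := hf.measurable
      fun_prop
  have hsw := integral_integral_swap hint
  rw [intervalIntegral.integral_of_le ht, ← integral_const_mul]
  calc _ = ∫ s in Ioc 0 t, ∫ l in Ioi (0:ℝ), l ^ (α - 1) * Real.exp (-((t - s) * l)) * f s := by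
        apply integral_congr_ae
        filter_upwards [hmem] with s hs
        rw [integral_mul_const, (expint hα.1 (sub_pos.2 hs.2)).2]; ring
    _ = _ := hsw
    _ = _ := by
        refine setIntegral_congr_fun measurableSet_Ioi fun l hl => ?_
        simp only [memY]
        rw [intervalIntegral.integral_of_le ht, ← integral_const_mul, ← integral_const_mul]
        refine setIntegral_congr_fun measurableSet_Ioc fun s hs => ?_
        rw [show -((t - s) * l) = -(l * t) + l * s by ring, Real.exp_add]; ring

lemma caputo_pos {α : ℝ} (hα : α ∈ Ioo (0:ℝ) 1) {f w : ℝ → ℝ} (hf : Continuous f)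
    (hw : ContDiff ℝ 1 w) (hw0 : ∀ t, 0 ≤ w t)
    (hw1 : ∀ t, deriv w t ≤ 0) {T : ℝ} (hT : 0 ≤ T) :
    IntervalIntegrable (fun t => w t * f t * ∫ s in (0:ℝ)..t, (t - s) ^ (-α) * f s) volume 0 T ∧
    0 ≤ ∫ t in (0:ℝ)..T, w t * f t * ∫ s in (0:ℝ)..t, (t - s) ^ (-α) * f s := by
  have hG := Real.Gamma_pos_of_pos hα.1
  have hwc := hw.continuous
  obtain ⟨M, hM⟩ := (isCompact_Icc (a := (0:ℝ)) (b := T)).exists_bound_of_continuousOn hf.continuousOn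
  obtain ⟨N, hN⟩ := (isCompact_Icc (a := (0:ℝ)) (b := T)).exists_bound_of_continuousOn
    (f := fun t => w t * f t) (by fun_prop)
  have hM0 : 0 ≤ M := (norm_nonneg _).trans (hM 0 ⟨le_rfl, hT⟩)
  have hN0 : 0 ≤ N := (norm_nonneg _).trans (hN 0 ⟨le_rfl, hT⟩)
  have hg : IntegrableOn (fun l : ℝ => l ^ (α - 1) * (if l ≤ 1 then M * T else M * l⁻¹)) (Ioi 0) := by
    rw [← Ioc_union_Ioi_eq_Ioi (zero_le_one' ℝ), integrableOn_union]
    constructor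
    · have h1 : IntegrableOn (fun l : ℝ => l ^ (α - 1) * (M * T)) (Ioc 0 1) := by
        have := (intervalIntegral.intervalIntegrable_rpow' (a := 0) (b := 1) (r := α - 1)
          (by linarith [hα.1])).mul_const (M * T)
        rwa [intervalIntegrable_iff_integrableOn_Ioc_of_le zero_le_one] at this
      refine h1.congr_fun (fun l hl => ?_) measurableSet_Ioc
      simp [hl.2]
    · have h1 : IntegrableOn (fun l : ℝ => l ^ (α - 2) * M) (Ioi 1) :=
        (integrableOn_Ioi_rpow_of_lt (by linarith [hα.2]) zero_lt_one).mul_const M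
      refine h1.congr_fun (fun l hl => ?_) measurableSet_Ioi
      have hl : 1 < l := hl
      have hl0 : 0 < l := by linarith
      simp only [not_le.2 hl, if_false]
      rw [show α - 2 = (α - 1) + (-1) by ring, Real.rpow_add hl0, Real.rpow_neg_one]; ring
  have hint : Integrable (Function.uncurry fun t l : ℝ => w t * f t * (l ^ (α - 1) * memY f l t))
      ((volume.restrict (Ioc 0 T)).prod (volume.restrict (Ioi 0))) := by
    have hdom := Integrable.mul_prod (μ := volume.restrict (Ioc 0 T)) (f := fun _ : ℝ => N)
      (integrable_const _) hg
    refine hdom.mono' ?_ ?_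
    · apply Measurable.aestronglyMeasurable
      have h1 : Measurable fun p : ℝ × ℝ => memY f p.2 p.1 :=
        ((memY_continuous hf).comp continuous_swap).measurable
      have := hf.measurable
      have := hwc.measurable
      simp only [Function.uncurry_def]
      fun_prop
    · rw [Measure.prod_restrict]
      filter_upwards [ae_restrict_mem (measurableSet_Ioc.prod measurableSet_Ioi)] with p hp
      obtain ⟨⟨h1, h2⟩, h3⟩ := hp
      have h3 : 0 < p.2 := h3
      have hb := memY_bound (f := f) (t := p.1) (l := p.2) (M := M) h1.le
        (fun s hs => hM s ⟨hs.1, hs.2.trans h2⟩) h3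
      have hN' := hN p.1 ⟨h1.le, h2⟩
      simp only [Function.uncurry]
      rw [norm_mul, norm_mul (p.2 ^ (α - 1)), Real.norm_of_nonneg (Real.rpow_nonneg h3.le _)]
      have : ‖memY f p.2 p.1‖ ≤ if p.2 ≤ 1 then M * T else M * p.2⁻¹ := by
        rw [Real.norm_eq_abs]
        split_ifs
        · exact hb.1.trans (by gcongr)
        · exact hb.2
      have := Real.rpow_nonneg h3.le (α - 1)
      gcongr
  have hrep : ∀ t ∈ Ioc 0 T, ∫ l in Ioi (0:ℝ), w t * f t * (l ^ (α - 1) * memY f l t)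
      = Real.Gamma α * (w t * f t * ∫ s in (0:ℝ)..t, (t - s) ^ (-α) * f s) := by
    intro t ht
    rw [integral_const_mul, ← caputo_repr hα hf ht.1.le]; ring
  constructor
  · rw [intervalIntegrable_iff_integrableOn_Ioc_of_le hT]
    have h1 : IntegrableOn _ (Ioc 0 T) := hint.integral_prod_left
    have h2 := (h1.congr_fun hrep measurableSet_Ioc).const_mul (Real.Gamma α)⁻¹
    refine h2.congr (Filter.Eventually.of_forall fun t => ?_)
    simp only
    field_simp
  · have hsw := integral_integral_swap hint
    rw [setIntegral_congr_fun measurableSet_Ioc hrep, integral_const_mul,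
      ← intervalIntegral.integral_of_le hT] at hsw
    have : 0 ≤ ∫ l in Ioi (0:ℝ), ∫ t in Ioc 0 T, w t * f t * (l ^ (α - 1) * memY f l t) := by
      refine setIntegral_nonneg measurableSet_Ioi fun l hl => ?_
      have hl : 0 < l := hl
      have h1 := memY_pos hf hw hw0 hw1 hl.le hT
      rw [intervalIntegral.integral_of_le hT] at h1
      have h2 : ∫ t in Ioc 0 T, w t * f t * (l ^ (α - 1) * memY f l t)
          = l ^ (α - 1) * ∫ t in Ioc 0 T, w t * f t * memY f l t := by
        rw [← integral_const_mul]; congr 1; ext t; ring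
      rw [h2]
      exact mul_nonneg (Real.rpow_nonneg hl.le _) h1
    rw [← hsw] at this
    exact nonneg_of_mul_nonneg_right this hG

/-- Directional derivative on space-time. -/
noncomputable def dirD {n : ℕ} (v : ℝ × (Fin n → ℝ)) (F : ℝ × (Fin n → ℝ) → ℝ)
    (p : ℝ × (Fin n → ℝ)) : ℝ := fderiv ℝ F p v

/-- Time direction. -/
def eT (n : ℕ) : ℝ × (Fin n → ℝ) := (1, 0)

/-- Space direction. -/
def eX {n : ℕ} (i : Fin n) : ℝ × (Fin n → ℝ) := (0, Pi.single i 1)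

lemma dirD_smooth {n : ℕ} (v : ℝ × (Fin n → ℝ)) {F : ℝ × (Fin n → ℝ) → ℝ}
    (hF : ContDiff ℝ (⊤ : ℕ∞) F) : ContDiff ℝ (⊤ : ℕ∞) (dirD v F) :=
  (hF.fderiv_right (m := (⊤ : ℕ∞)) (by norm_cast)).clm_apply contDiff_const

lemma dirD_comm {n : ℕ} (v w : ℝ × (Fin n → ℝ)) {F : ℝ × (Fin n → ℝ) → ℝ}
    (hF : ContDiff ℝ (⊤ : ℕ∞) F) (p) : dirD v (dirD w F) p = dirD w (dirD v F) p := by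
  have hs : IsSymmSndFDerivAt ℝ F p := hF.contDiffAt.isSymmSndFDerivAt (by
    simp only [minSmoothness_of_isRCLikeNormedField]; exact WithTop.coe_le_coe.2 (le_top : (2 : ℕ∞) ≤ ⊤))
  have hd : DifferentiableAt ℝ (fderiv ℝ F) p :=
    (hF.fderiv_right (m := (⊤ : ℕ∞)) (by norm_cast)).differentiable (by simp) p
  have key : ∀ v w, dirD v (dirD w F) p = fderiv ℝ (fderiv ℝ F) p v w := by
    intro v w
    unfold dirD
    rw [fderiv_clm_apply hd (differentiableAt_const w)]
    simp
  rw [key, key]; exact hs v w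

lemma dirD_mul {n : ℕ} (v : ℝ × (Fin n → ℝ)) {F G : ℝ × (Fin n → ℝ) → ℝ}
    (hF : ContDiff ℝ (⊤ : ℕ∞) F) (hG : ContDiff ℝ (⊤ : ℕ∞) G) (p) :
    dirD v (fun q => F q * G q) p = dirD v F p * G p + F p * dirD v G p := by
  unfold dirD
  rw [fderiv_fun_mul (hF.differentiable (by simp) p) (hG.differentiable (by simp) p)]
  simp; ring

lemma dirD_zero_of_open {n : ℕ} (v : ℝ × (Fin n → ℝ)) {F : ℝ × (Fin n → ℝ) → ℝ}
    {O : Set (ℝ × (Fin n → ℝ))} (hO : IsOpen O) (h : ∀ p ∈ O, F p = 0) :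
    ∀ p ∈ O, dirD v F p = 0 := by
  intro p hp
  have : F =ᶠ[nhds p] fun _ => 0 := by
    filter_upwards [hO.mem_nhds hp] with q hq using h q hq
  unfold dirD
  rw [this.fderiv_eq]; simp

lemma hasDerivAt_T {n : ℕ} {F : ℝ × (Fin n → ℝ) → ℝ} (hF : ContDiff ℝ (⊤ : ℕ∞) F) (t : ℝ)
    (x : Fin n → ℝ) : HasDerivAt (fun s => F (s, x)) (dirD (eT n) F (t, x)) t :=
  (hF.differentiable (by simp) (t, x)).hasFDerivAt.comp_hasDerivAt t
    ((hasDerivAt_id t).prodMk (hasDerivAt_const t x))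

lemma hasDerivAt_X {n : ℕ} {F : ℝ × (Fin n → ℝ) → ℝ} (hF : ContDiff ℝ (⊤ : ℕ∞) F) (t : ℝ)
    (x : Fin n → ℝ) (i : Fin n) (s : ℝ) : HasDerivAt (fun s => F (t, Function.update x i s))
      (dirD (eX i) F (t, Function.update x i s)) s :=
  (hF.differentiable (by simp) (t, Function.update x i s)).hasFDerivAt.comp_hasDerivAt s
    ((hasDerivAt_const s t).prodMk (hasDerivAt_update x i s))

lemma integral_dirD_X {n : ℕ} {F : ℝ × (Fin n → ℝ) → ℝ} (hF : ContDiff ℝ (⊤ : ℕ∞) F) (t : ℝ)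
    {K : Set (Fin n → ℝ)} (hK : IsCompact K) (h0 : ∀ x, x ∉ K → F (t, x) = 0) (i : Fin n) :
    Integrable (fun x => dirD (eX i) F (t, x)) ∧ ∫ x, dirD (eX i) F (t, x) = 0 := by
  let g : (Fin n → ℝ) → ℝ := fun x => F (t, x)
  have hg : ContDiff ℝ (⊤ : ℕ∞) g := hF.comp (contDiff_const.prodMk contDiff_id)
  have hgs : HasCompactSupport g := HasCompactSupport.intro hK h0
  have he : ∀ x, dirD (eX i) F (t, x) = fderiv ℝ g x (Pi.single i 1) := by
    intro x
    have h1 : HasFDerivAt g ((fderiv ℝ F (t, x)).comp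
        ((0 : (Fin n → ℝ) →L[ℝ] ℝ).prod (ContinuousLinearMap.id ℝ (Fin n → ℝ)))) x :=
      (hF.differentiable (by simp) (t, x)).hasFDerivAt.comp x
        ((hasFDerivAt_const t x).prodMk (hasFDerivAt_id x))
    rw [h1.fderiv]; rfl
  simp_rw [he]
  have hgi : Integrable g := hg.continuous.integrable_of_hasCompactSupport hgs
  have hdi : Integrable fun x => fderiv ℝ g x (Pi.single i 1) := by
    apply Continuous.integrable_of_hasCompactSupport
    · exact (hg.continuous_fderiv (by simp)).clm_apply continuous_const
    · exact hgs.fderiv_apply (𝕜 := ℝ) _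
  refine ⟨hdi, ?_⟩
  have := integral_mul_fderiv_eq_neg_fderiv_mul_of_integrable (μ := volume) (f := fun _ => (1:ℝ))
    (g := g) (v := Pi.single i 1) (by simp) (by simpa using hdi) (by simpa using hgi)
    (by simp) (fun x _ => hg.differentiable (by simp) x)
  simpa using this

lemma energy_flux {n : ℕ} (C V : ℝ) (hC : 0 < C) (d W : Fin n → ℝ) (hd : ∑ i, d i ^ 2 ≤ C) :
    0 ≤ (C * V ^ 2 + ∑ i, W i ^ 2) / 2 - V * ∑ i, d i * W i := by
  have h1 := Finset.sum_mul_sq_le_sq_mul_sq Finset.univ d W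
  set S := ∑ i, d i * W i
  set A := ∑ i, W i ^ 2
  have hA : 0 ≤ A := Finset.sum_nonneg fun i _ => sq_nonneg _
  have h2 : S ^ 2 ≤ C * A := h1.trans (by gcongr)
  have h3 : 0 ≤ C * ((C * V ^ 2 + A) / 2 - V * S) := by nlinarith [sq_nonneg (C * V - S)]
  exact nonneg_of_mul_nonneg_right h3 hC

/-- Finite propagation speed for the fractionally attenuated wave equation: if the Cauchy
data vanish on `{φ < τ}` where `c²|∇φ|² ≤ 1`, then `u` vanishes on the backward cone
`{(t,x) : 0 ≤ t ≤ τ, φ(x) < τ − t}`. -/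
theorem finite_propagation_speed_fracWave {n : ℕ} (hn : 1 ≤ n) (α τ : ℝ)
    (hα : α ∈ Ioo (0:ℝ) 1) (hτ : 0 < τ) (c a : (Fin n → ℝ) → ℝ) (c₀ : ℝ) (hc₀ : 0 < c₀)
    (hc : ContDiff ℝ (⊤ : ℕ∞) c) (hcge : ∀ x, c₀ ≤ c x)
    (ha : ContDiff ℝ (⊤ : ℕ∞) a) (hage : ∀ x, 0 ≤ a x)
    (φ : (Fin n → ℝ) → ℝ) (hφ : ContDiff ℝ (⊤ : ℕ∞) φ)
    (hφgrad : ∀ x, (c x) ^ 2 * ∑ i, (partialD φ i x) ^ 2 ≤ 1)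
    (u : ℝ → (Fin n → ℝ) → ℝ)
    (hu : ContDiff ℝ (⊤ : ℕ∞) (fun p : ℝ × (Fin n → ℝ) => u p.1 p.2))
    (K : Set (Fin n → ℝ)) (hK : IsCompact K)
    (hsupp : ∀ t ∈ Icc (0:ℝ) τ, Function.support (u t) ⊆ K)
    (hpde : ∀ t ∈ Ioo (0:ℝ) τ, ∀ x,
      deriv (fun s => deriv (fun r => u r x) s) t - (c x) ^ 2 * laplacian (u t) x
        + a x * caputo α (fun s => u s x) t = 0)
    (hinit : ∀ x, φ x < τ → u 0 x = 0 ∧ deriv (fun s => u s x) 0 = 0) :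
    ∀ t x, 0 ≤ t → t ≤ τ → φ x < τ - t → u t x = 0 := by
  set U : ℝ × (Fin n → ℝ) → ℝ := fun p => u p.1 p.2 with hU
  set V := dirD (eT n) U with hVdef
  set W : Fin n → ℝ × (Fin n → ℝ) → ℝ := fun i => dirD (eX i) U with hWdef
  have hVs : ContDiff ℝ (⊤ : ℕ∞) V := dirD_smooth _ hu
  have hWs : ∀ i, ContDiff ℝ (⊤ : ℕ∞) (W i) := fun i => dirD_smooth _ hu
  -- identification of the derivatives
  have eV : ∀ t x, deriv (fun s => u s x) t = V (t, x) := fun t x => (hasDerivAt_T hu t x).deriv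
  have eVt : ∀ t x, deriv (fun s => deriv (fun r => u r x) s) t = dirD (eT n) V (t, x) := by
    intro t x
    simp_rw [eV]
    exact (hasDerivAt_T hVs t x).deriv
  have eW : ∀ t x i s, deriv (fun r => u t (Function.update x i r)) s
      = W i (t, Function.update x i s) := fun t x i s => (hasDerivAt_X hu t x i s).deriv
  have eLap : ∀ t x, laplacian (u t) x = ∑ i, dirD (eX i) (W i) (t, x) := by
    intro t x
    unfold laplacian secondPartial
    refine Finset.sum_congr rfl fun i _ => ?_
    simp_rw [eW]
    rw [(hasDerivAt_X (hWs i) t x i (x i)).deriv, Function.update_eq_self]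
  have eCap : ∀ t x, caputo α (fun s => u s x) t =
      (1 / Real.Gamma (1 - α)) * ∫ s in (0:ℝ)..t, (t - s) ^ (-α) * V (s, x) := by
    intro t x
    unfold caputo
    simp_rw [eV]
  -- the weight
  set χ := expNegInvGlue with hχ
  have hχs : ContDiff ℝ (⊤ : ℕ∞) χ := expNegInvGlue.contDiff
  have hχ' : ∀ s, 0 ≤ deriv χ s := fun s => expNegInvGlue.monotone.deriv_nonneg
  set Y : ℝ × (Fin n → ℝ) → ℝ := fun p => τ - p.1 - φ p.2 with hY
  have hYs : ContDiff ℝ (⊤ : ℕ∞) Y :=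
    (contDiff_const.sub contDiff_fst).sub (hφ.comp contDiff_snd)
  set X : ℝ × (Fin n → ℝ) → ℝ := fun p => χ (Y p) with hX
  have hXs : ContDiff ℝ (⊤ : ℕ∞) X := hχs.comp hYs
  have hX0 : ∀ p, 0 ≤ X p := fun p => expNegInvGlue.nonneg _
  have hχd : ∀ s, HasDerivAt χ (deriv χ s) s := fun s =>
    (hχs.differentiable (by simp) s).hasDerivAt
  have hXt : ∀ t x, HasDerivAt (fun s => X (s, x)) (-deriv χ (Y (t, x))) t := by
    intro t x
    have h1 : HasDerivAt (fun s : ℝ => Y (s, x)) (-1) t :=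
      ((hasDerivAt_id t).const_sub τ).sub_const (φ x)
    have := (hχd (Y (t, x))).comp t h1
    exact this.congr_deriv (by ring)
  have eXi : ∀ t x i, dirD (eX i) X (t, x) = -(deriv χ (Y (t, x)) * partialD φ i x) := by
    intro t x i
    have hp : HasDerivAt (fun s => φ (Function.update x i s)) (partialD φ i x) (x i) := by
      refine DifferentiableAt.hasDerivAt ?_
      exact (hφ.differentiable (by simp) _).comp (x i) (hasDerivAt_update x i (x i)).differentiableAt
    have h1 : HasDerivAt (fun s : ℝ => Y (t, Function.update x i s)) (-partialD φ i x) (x i) :=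
      hp.const_sub (τ - t)
    have h2 := (hχd (Y (t, Function.update x i (x i)))).comp (x i) h1
    have h3 := hasDerivAt_X hXs t x i (x i)
    have h4 := h3.unique h2
    rw [Function.update_eq_self] at h4
    rw [h4]; ring
  -- energy density
  set C : (Fin n → ℝ) → ℝ := fun x => (c x ^ 2)⁻¹ with hC
  have hcpos : ∀ x, 0 < c x := fun x => hc₀.trans_le (hcge x)
  have hCpos : ∀ x, 0 < C x := fun x => inv_pos.2 (pow_pos (hcpos x) 2)
  have hCc : Continuous C := (hc.continuous.pow 2).inv₀ fun x => (pow_pos (hcpos x) 2).ne'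
  set e : ℝ × (Fin n → ℝ) → ℝ := fun p => (C p.2 * V p ^ 2 + ∑ i, W i p ^ 2) / 2 with he
  have hVc := hVs.continuous
  have hWc : ∀ i, Continuous (W i) := fun i => (hWs i).continuous
  have hXc := hXs.continuous
  have hec : Continuous e := by
    have : Continuous fun p : ℝ × (Fin n → ℝ) => C p.2 := hCc.comp continuous_snd
    simp only [he]; fun_prop
  have he0 : ∀ p, 0 ≤ e p := fun p => by
    have h1 : 0 ≤ ∑ i, W i p ^ 2 := Finset.sum_nonneg fun i _ => sq_nonneg _
    have h2 := mul_nonneg (hCpos p.2).le (sq_nonneg (V p))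
    simp only [he]; linarith
  set P : Fin n → ℝ × (Fin n → ℝ) → ℝ := fun i p => X p * (V p * W i p) with hP
  have hPs : ∀ i, ContDiff ℝ (⊤ : ℕ∞) (P i) := fun i => hXs.mul (hVs.mul (hWs i))
  set Q : ℝ × (Fin n → ℝ) → ℝ := fun p => ∑ i, dirD (eX i) (P i) p with hQ
  have hQc : Continuous Q := by
    simp only [hQ]
    exact continuous_finsetSum _ fun i _ => (dirD_smooth _ (hPs i)).continuous
  set R : ℝ × (Fin n → ℝ) → ℝ := fun p => -deriv χ (Y p) * e p + X p *
    (C p.2 * V p * dirD (eT n) V p + ∑ i, W i p * dirD (eT n) (W i) p) with hR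
  have hRc : Continuous R := by
    have h1 : Continuous fun p : ℝ × (Fin n → ℝ) => C p.2 := hCc.comp continuous_snd
    have h2 : Continuous (dirD (eT n) V) := (dirD_smooth _ hVs).continuous
    have h3 : ∀ i, Continuous (dirD (eT n) (W i)) := fun i => (dirD_smooth _ (hWs i)).continuous
    have h4 : Continuous (deriv χ) := hχs.continuous_deriv (by simp)
    have h5 := hYs.continuous
    simp only [hR]; fun_prop
  have hRd : ∀ t x, HasDerivAt (fun s => X (s, x) * e (s, x)) (R (t, x)) t := by
    intro t x
    have h1 := ((hasDerivAt_T hVs t x).pow 2).const_mul (C x)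
    have h2 : HasDerivAt (fun s => ∑ i, W i (s, x) ^ 2)
        (∑ i, 2 * W i (t, x) * dirD (eT n) (W i) (t, x)) t := by
      refine HasDerivAt.fun_sum fun i _ => ?_
      refine ((hasDerivAt_T (hWs i) t x).pow 2).congr_deriv (by simp)
    have h3 := (hXt t x).mul ((h1.add h2).div_const 2)
    refine h3.congr_deriv ?_
    simp only [hR, he]
    have h4 : ∑ i, 2 * W i (t, x) * dirD (eT n) (W i) (t, x)
        = 2 * ∑ i, W i (t, x) * dirD (eT n) (W i) (t, x) := by
      rw [Finset.mul_sum]; exact Finset.sum_congr rfl fun i _ => by ring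
    simp only [h4, Pi.add_apply, Pi.pow_apply]
    push_cast
    ring
  -- pointwise inequality
  have hpt : ∀ t ∈ Ioo (0:ℝ) τ, ∀ x, C x * a x * (1 / Real.Gamma (1 - α)) *
      (X (t, x) * V (t, x) * ∫ s in (0:ℝ)..t, (t - s) ^ (-α) * V (s, x)) ≤ Q (t, x) - R (t, x) := by
    intro t ht x
    have hp := hpde t ht x
    rw [eVt, eLap, eCap] at hp
    have hQe : Q (t, x) = -(deriv χ (Y (t, x)) * (V (t, x) * ∑ i, partialD φ i x * W i (t, x)))
        + X (t, x) * ∑ i, W i (t, x) * dirD (eT n) (W i) (t, x)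
        + X (t, x) * V (t, x) * ∑ i, dirD (eX i) (W i) (t, x) := by
      simp only [hQ, Finset.mul_sum, ← Finset.sum_neg_distrib, ← Finset.sum_add_distrib]
      refine Finset.sum_congr rfl fun i _ => ?_
      simp only [hP]
      rw [dirD_mul _ hXs (hVs.mul (hWs i)), dirD_mul _ hVs (hWs i), eXi,
        show dirD (eX i) V (t, x) = dirD (eT n) (W i) (t, x) from dirD_comm _ _ hu _]
      ring
    have hCc2 : C x * c x ^ 2 = 1 := inv_mul_cancel₀ (pow_pos (hcpos x) 2).ne'
    have hfl := energy_flux (C x) (V (t, x)) (hCpos x) (fun i => partialD φ i x)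
      (fun i => W i (t, x)) (by
        have := hφgrad x
        have h2 := mul_le_mul_of_nonneg_left this (hCpos x).le
        rw [← mul_assoc, hCc2] at h2
        linarith)
    have hfl2 := mul_nonneg (hχ' (Y (t, x))) hfl
    rw [hQe]
    simp only [hR, he]
    set I := ∫ s in (0:ℝ)..t, (t - s) ^ (-α) * V (s, x)
    set L := ∑ i, dirD (eX i) (W i) (t, x)
    set S := ∑ i, W i (t, x) * dirD (eT n) (W i) (t, x)
    have hL : L = C x * (dirD (eT n) V (t, x) + a x * (1 / Real.Gamma (1 - α) * I)) := by
      linear_combination (-C x) * hp - L * hCc2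
    rw [hL]
    refine le_of_sub_nonneg (hfl2.trans_eq ?_)
    ring
  -- integrated inequality
  have hGpos : 0 < Real.Gamma (1 - α) := Real.Gamma_pos_of_pos (by linarith [hα.2])
  have hinit0 : ∀ x, X (0, x) * e (0, x) = 0 := by
    intro x
    by_cases hx : φ x < τ
    · have hV0 : V (0, x) = 0 := by rw [← eV]; exact (hinit x hx).2
      have hW0 : ∀ i, W i (0, x) = 0 := by
        intro i
        have h1 := eW 0 x i (x i)
        rw [Function.update_eq_self] at h1
        rw [← h1]
        have : (fun r => u 0 (Function.update x i r)) =ᶠ[nhds (x i)] fun _ => 0 := by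
          have hcont : Continuous fun r => φ (Function.update x i r) :=
            hφ.continuous.comp (continuous_const.update i continuous_id)
          have hmem : {r | φ (Function.update x i r) < τ} ∈ nhds (x i) :=
            (isOpen_lt hcont continuous_const).mem_nhds (by simpa using hx)
          filter_upwards [hmem] with r hr using (hinit _ hr).1
        rw [this.deriv_eq]; simp
      simp [he, hV0, hW0]
    · have : X (0, x) = 0 := expNegInvGlue.zero_of_nonpos (by simp only [hY]; linarith)
      rw [this, zero_mul]
  have hle : ∀ T ∈ Ioo (0:ℝ) τ, ∀ x, X (T, x) * e (T, x) ≤ ∫ t in (0:ℝ)..T, Q (t, x) := by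
    intro T hT x
    have hRx : Continuous fun t => R (t, x) := by fun_prop
    have hQx : Continuous fun t => Q (t, x) := by fun_prop
    have h1 := intervalIntegral.integral_eq_sub_of_hasDerivAt (a := 0) (b := T)
      (fun t _ => hRd t x) (hRx.intervalIntegrable _ _)
    rw [hinit0, sub_zero] at h1
    have hpos := caputo_pos hα (f := fun t => V (t, x)) (w := fun t => X (t, x)) (by fun_prop)
      ((hXs.comp (contDiff_id.prodMk contDiff_const)).of_le (by exact mod_cast le_top))
      (fun t => hX0 _) (fun t => by rw [(hXt t x).deriv]; linarith [hχ' (Y (t, x))]) hT.1.le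
    have h2 : ∫ t in (0:ℝ)..T, C x * a x * (1 / Real.Gamma (1 - α)) *
        (X (t, x) * V (t, x) * ∫ s in (0:ℝ)..t, (t - s) ^ (-α) * V (s, x))
        ≤ ∫ t in (0:ℝ)..T, (Q (t, x) - R (t, x)) := by
      refine intervalIntegral.integral_mono_on_of_le_Ioo hT.1.le (hpos.1.const_mul _)
        ((hQx.sub hRx).intervalIntegrable _ _) fun t ht => hpt t ⟨ht.1, ht.2.trans hT.2⟩ x
    rw [intervalIntegral.integral_const_mul, intervalIntegral.integral_sub
      (hQx.intervalIntegrable _ _) (hRx.intervalIntegrable _ _), h1] at h2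
    have h3 : 0 ≤ C x * a x * (1 / Real.Gamma (1 - α)) :=
      mul_nonneg (mul_nonneg (hCpos x).le (hage x)) (by positivity)
    have h4 := mul_nonneg h3 hpos.2
    linarith
  -- vanishing off K
  set O : Set (ℝ × (Fin n → ℝ)) := Ioo 0 τ ×ˢ Kᶜ with hO
  have hOo : IsOpen O := isOpen_Ioo.prod hK.isClosed.isOpen_compl
  have hU0 : ∀ p ∈ O, U p = 0 := by
    intro p hp
    by_contra h
    exact hp.2 (hsupp p.1 ⟨hp.1.1.le, hp.1.2.le⟩ h)
  have hV0 : ∀ p ∈ O, V p = 0 := dirD_zero_of_open (eT n) hOo hU0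
  have hW0 : ∀ i, ∀ p ∈ O, W i p = 0 := fun i => dirD_zero_of_open (eX i) hOo hU0
  have hP0 : ∀ i, ∀ p ∈ O, P i p = 0 := fun i p hp => by simp [hP, hW0 i p hp]
  have hQ0 : ∀ p ∈ O, Q p = 0 := fun p hp => by
    simp only [hQ]
    exact Finset.sum_eq_zero fun i _ => dirD_zero_of_open (eX i) hOo (hP0 i) p hp
  have hzero : ∀ T ∈ Ioo (0:ℝ) τ, ∀ x, X (T, x) * e (T, x) = 0 := by
    intro T hT
    have hcont : Continuous fun x => X (T, x) * e (T, x) := by fun_prop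
    have hnn : ∀ x, 0 ≤ X (T, x) * e (T, x) := fun x => mul_nonneg (hX0 _) (he0 _)
    have hsw : ∫ t in (0:ℝ)..T, ∫ x in K, Q (t, x) = ∫ x in K, ∫ t in (0:ℝ)..T, Q (t, x) := by
      refine intervalIntegral_integral_swap (f := fun t x => Q (t, x)) ?_
      rw [uIoc_of_le hT.1.le, Measure.prod_restrict]
      have h1 : IntegrableOn Q (Icc 0 T ×ˢ K) (volume.prod volume) :=
        hQc.continuousOn.integrableOn_compact (isCompact_Icc.prod hK)
      exact h1.mono_set (prod_mono Ioc_subset_Icc_self subset_rfl)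
    have hz : ∫ t in (0:ℝ)..T, ∫ x in K, Q (t, x) = 0 := by
      rw [intervalIntegral.integral_of_le hT.1.le]
      refine setIntegral_eq_zero_of_forall_eq_zero fun t ht => ?_
      have htO : t ∈ Ioo 0 τ := ⟨ht.1, ht.2.trans_lt hT.2⟩
      rw [setIntegral_eq_integral_of_forall_compl_eq_zero fun x hx => hQ0 (t, x) ⟨htO, hx⟩]
      have hi := fun i => integral_dirD_X (hPs i) t hK (fun x hx => hP0 i (t, x) ⟨htO, hx⟩) i
      simp only [hQ]
      rw [integral_finsetSum _ fun i _ => (hi i).1]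
      exact Finset.sum_eq_zero fun i _ => (hi i).2
    have hQi : Continuous fun x => ∫ t in (0:ℝ)..T, Q (t, x) := by
      refine intervalIntegral.continuous_parametric_intervalIntegral_of_continuous'
        (f := fun x t => Q (t, x)) ?_ 0 T
      exact hQc.comp continuous_swap
    have hKi : IntegrableOn (fun x => X (T, x) * e (T, x)) K :=
      hcont.continuousOn.integrableOn_compact hK
    have hmono : ∫ x in K, X (T, x) * e (T, x) ≤ 0 := by
      rw [← hz, hsw]
      exact setIntegral_mono hKi (hQi.continuousOn.integrableOn_compact hK) (hle T hT)
    have heq : ∫ x in K, X (T, x) * e (T, x) = 0 :=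
      le_antisymm hmono (integral_nonneg hnn)
    rw [setIntegral_eq_integral_of_forall_compl_eq_zero (fun x hx => by
      have hp : (T, x) ∈ O := ⟨hT, hx⟩
      simp [he, hV0 _ hp, hW0 _ _ hp])] at heq
    have hcs : HasCompactSupport fun x => X (T, x) * e (T, x) := HasCompactSupport.intro hK
      fun x hx => by
        have hp : (T, x) ∈ O := ⟨hT, hx⟩
        simp [he, hV0 _ hp, hW0 _ _ hp]
    intro x
    by_contra hne
    have := hcont.integral_pos_of_hasCompactSupport_nonneg_nonzero (μ := volume) hcs hnn hne
    linarith
  have hVz : ∀ t x, t ∈ Ioo 0 τ → φ x < τ - t → V (t, x) = 0 := by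
    intro t x ht hx
    have hXp : 0 < X (t, x) := expNegInvGlue.pos_of_pos (by simp only [hY]; linarith)
    have h1 : e (t, x) = 0 := (mul_eq_zero.1 (hzero t ht x)).resolve_left hXp.ne'
    simp only [he] at h1
    have h2 : 0 ≤ ∑ i, W i (t, x) ^ 2 := Finset.sum_nonneg fun i _ => sq_nonneg _
    have h3 := hCpos x
    by_contra hne
    have h4 : 0 < C x * V (t, x) ^ 2 := by positivity
    linarith
  intro t x ht0 htτ hx
  have hVx : Continuous fun s => V (s, x) := by fun_prop
  have hF := intervalIntegral.integral_eq_sub_of_hasDerivAt (a := 0) (b := t)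
      (fun s _ => hasDerivAt_T hu s x) (hVx.intervalIntegrable _ _)
  have hF0 : ∫ s in (0:ℝ)..t, V (s, x) = 0 := by
    rw [intervalIntegral.integral_of_le ht0, ← integral_Ioc_eq_integral_Ioo.symm]
    refine setIntegral_eq_zero_of_forall_eq_zero fun s hs => ?_
    exact hVz s x ⟨hs.1, hs.2.trans_le htτ⟩ (by linarith [hs.2])
  have hu0 := (hinit x (by linarith)).1
  have : u t x - u 0 x = 0 := hF.symm.trans hF0
  linarith
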